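/- Let n ≥ 2, let K ⊆ ℂⁿ be compact, and let x, y ∈ ℂⁿ be two points lying outside the holomorphically convex hull Ĥ(K). Let x₁, …, x_m ∈ K and let ε > 0. Then there exists a holomorphic automorphism Ψ of ℂⁿ such that Ψ(x_i) = x_i for every i = 1, …, m, ‖Ψ(z) − z‖ < ε for all z ∈ K, and Ψ(y) = x. (This is Proposition 2.5 of the paper specialized to X = ℂⁿ, which has the density property.) -/

import Mathlib

/-- The holomorphically convex hull of a set `K ⊆ ℂⁿ`: the set of points `z`
with `‖f z‖ ≤ sup_{w ∈ K} ‖f w‖` for every entire function `f : ℂⁿ → ℂ`. -/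
def holomorphicHull {n : ℕ} (K : Set (EuclideanSpace ℂ (Fin n))) :
    Set (EuclideanSpace ℂ (Fin n)) :=
  {z | ∀ f : EuclideanSpace ℂ (Fin n) → ℂ, Differentiable ℂ f →
    ‖f z‖ ≤ sSup ((fun w => ‖f w‖) '' K)}

/-- A holomorphic automorphism of `ℂⁿ`: a bijective entire map whose inverse is
also entire. -/
def IsHolomorphicAutomorphism {n : ℕ} (g : EuclideanSpace ℂ (Fin n) → EuclideanSpace ℂ (Fin n)) :
    Prop :=
  Differentiable ℂ g ∧
    ∃ ginv : EuclideanSpace ℂ (Fin n) → EuclideanSpace ℂ (Fin n),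
      Differentiable ℂ ginv ∧ Function.LeftInverse ginv g ∧ Function.RightInverse ginv g

open Metric Set Filter Topology

section ExponentialApproximation

variable {E : Type*} [NormedAddCommGroup E] [NormedSpace ℂ E]

/-- The restriction of the exponential of a continuous linear functional to a closed ball. -/
noncomputable def expOnBall (R : ℝ) (l : E →L[ℂ] ℂ) : C(closedBall (0 : E) R, ℂ) :=
  ⟨fun z => Complex.exp (l z), by fun_prop⟩

theorem adjoin_expOnBall_eq_span (R : ℝ) :
    Subalgebra.toSubmodule (Algebra.adjoin ℂ (range (expOnBall (E := E) R))) =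
      Submodule.span ℂ (range (expOnBall (E := E) R)) := by
  apply Algebra.adjoin_eq_span_of_subset
  intro f hf
  apply Submodule.subset_span
  induction hf using Submonoid.closure_induction with
  | mem f hf => exact hf
  | one => exact ⟨0, by ext z; simp [expOnBall]⟩
  | mul f g _ _ hf hg =>
    obtain ⟨l, rfl⟩ := hf
    obtain ⟨m, rfl⟩ := hg
    exact ⟨l + m, by ext z; simp [expOnBall, Complex.exp_add]⟩

variable [ProperSpace E]

/-- The closed algebra of functions on a closed ball generated by exponentials of continuous
linear functionals. -/
noncomputable def expAlgebra (E : Type*) [NormedAddCommGroup E] [NormedSpace ℂ E]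
    [ProperSpace E] (R : ℝ) :
    Subalgebra ℂ C(closedBall (0 : E) R, ℂ) :=
  (Algebra.adjoin ℂ (range (expOnBall (E := E) R))).topologicalClosure

theorem isClosed_expAlgebra (R : ℝ) :
    IsClosed (expAlgebra E R : Set C(closedBall (0 : E) R, ℂ)) :=
  Subalgebra.isClosed_topologicalClosure _

theorem expOnBall_mem_expAlgebra (R : ℝ) (l : E →L[ℂ] ℂ) : expOnBall R l ∈ expAlgebra E R :=
  Subalgebra.le_topologicalClosure _ (Algebra.subset_adjoin (mem_range_self l))

theorem exists_finsupp_of_mem_expAlgebra {R : ℝ}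
    {f : C(closedBall (0 : E) R, ℂ)} (hf : f ∈ expAlgebra E R) {ε : ℝ} (hε : 0 < ε) :
    ∃ c : (E →L[ℂ] ℂ) →₀ ℂ, ∀ z, ‖f z - ∑ l ∈ c.support, c l * Complex.exp (l z)‖ ≤ ε := by
  obtain ⟨g, hg, hfg⟩ := Metric.mem_closure_iff.mp hf ε hε
  have hg' : g ∈ Submodule.span ℂ (range (expOnBall (E := E) R)) := by
    rw [← adjoin_expOnBall_eq_span]; exact hg
  obtain ⟨c, rfl⟩ := Finsupp.mem_span_range_iff_exists_finsupp.mp hg'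
  refine ⟨c, fun z => ?_⟩
  have := (ContinuousMap.dist_apply_le_dist (f := f) z).trans hfg.le
  rw [dist_eq_norm] at this
  simpa [Finsupp.sum, expOnBall, ContinuousMap.sum_apply] using this

theorem linear_mem_expAlgebra {R : ℝ} (l : E →L[ℂ] ℂ) :
    (⟨fun z => l z, by fun_prop⟩ : C(closedBall (0 : E) R, ℂ)) ∈ expAlgebra E R := by
  set L : C(closedBall (0 : E) R, ℂ) := ⟨fun z => l z, by fun_prop⟩ with hL
  have hexp : ∀ t : ℂ, NormedSpace.exp (t • L) = expOnBall R (t • l) := by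
    intro t
    ext z
    have := NormedSpace.map_exp (ContinuousMap.evalAlgHom ℂ ℂ z) (continuous_eval_const z) (t • L)
    simp only [ContinuousMap.evalAlgHom_apply] at this
    rw [this, ← Complex.exp_eq_exp_ℂ]
    simp [expOnBall, hL]
  have hd := hasDerivAt_exp_smul_const (𝕂 := ℂ) L 0
  have ht := hd.tendsto_slope
  simp only [zero_smul, NormedSpace.exp_zero, one_mul] at ht
  refine (isClosed_expAlgebra R).mem_of_tendsto ht (Eventually.of_forall fun t => ?_)
  rw [slope_def_module, hexp, hexp]
  exact (expAlgebra E R).smul_mem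
    (sub_mem (expOnBall_mem_expAlgebra R _) (expOnBall_mem_expAlgebra R _)) _

theorem Subalgebra.tsum_geometric_mem_of_isClosed {A : Type*} [NormedRing A]
    [NormedAlgebra ℂ A] [CompleteSpace A] (S : Subalgebra ℂ A) (hS : IsClosed (S : Set A)) {a : A} (ha : a ∈ S) (h : ‖a‖ < 1) :
    ∑' k : ℕ, a ^ k ∈ S :=
  hS.mem_of_tendsto (summable_geometric_of_norm_lt_one h).hasSum
    (Eventually.of_forall fun _ => sum_mem fun k _ => pow_mem ha k)

theorem Submodule.intervalIntegral_mem_of_isClosed {F : Type*} [NormedAddCommGroup F]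
    [NormedSpace ℂ F] [CompleteSpace F] (S : Submodule ℂ F) (hS : IsClosed (S : Set F))
    {h : ℝ → F} (hc : Continuous h) (hmem : ∀ t, h t ∈ S) (a b : ℝ) :
    ∫ t in a..b, h t ∈ S := by
  have : IsClosed (S : Set F) := hS
  have key := S.mkQL.intervalIntegral_comp_comm
    (hc.intervalIntegrable (μ := MeasureTheory.volume) a b)
  rw [← Submodule.Quotient.mk_eq_zero]
  have hz : ∀ t, S.mkQL (h t) = 0 := fun t => (Submodule.Quotient.mk_eq_zero S).mpr (hmem t)
  simp only [hz, intervalIntegral.integral_zero] at key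
  exact key.symm

/-- The projection of `ℂⁿ` to the coordinates in `s`. -/
noncomputable def coordProj {n : ℕ} (s : Finset (Fin n)) (z : EuclideanSpace ℂ (Fin n)) :
    EuclideanSpace ℂ (Fin n) :=
  ∑ i ∈ s, z i • EuclideanSpace.single i (1 : ℂ)

theorem differentiable_coordProj {n : ℕ} (s : Finset (Fin n)) :
    Differentiable ℂ (coordProj s) := by
  unfold coordProj
  fun_prop

theorem inv_sub_coord_mem_expAlgebra {n : ℕ} {R r : ℝ} (hR : 0 ≤ R) (hr : R < r) (i : Fin n)
    {c : ℂ} (hc : ‖c‖ = r) {g : C(closedBall (0 : EuclideanSpace ℂ (Fin n)) R, ℂ)}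
    (hg : ∀ z, g z = (c - z.1 i)⁻¹) : g ∈ expAlgebra (EuclideanSpace ℂ (Fin n)) R := by
  have hr0 : 0 < r := hR.trans_lt hr
  have hc0 : c ≠ 0 := by rw [← norm_pos_iff, hc]; exact hr0
  set Z : C(closedBall (0 : EuclideanSpace ℂ (Fin n)) R, ℂ) :=
    ⟨fun z => EuclideanSpace.proj (𝕜 := ℂ) i z.1, by fun_prop⟩ with hZ
  have hZm : Z ∈ expAlgebra _ R := linear_mem_expAlgebra (EuclideanSpace.proj (𝕜 := ℂ) i)
  have hZn : ‖c⁻¹ • Z‖ < 1 := by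
    rw [norm_smul, norm_inv, hc, inv_mul_lt_one₀ hr0]
    refine lt_of_le_of_lt ((ContinuousMap.norm_le _ hR).mpr fun z => ?_) hr
    exact (PiLp.norm_apply_le z.1 i).trans (mem_closedBall_zero_iff.mp z.2)
  have hT := (expAlgebra _ R).tsum_geometric_mem_of_isClosed (isClosed_expAlgebra R)
    ((expAlgebra _ R).smul_mem hZm c⁻¹) hZn
  have : g = c⁻¹ • ∑' k : ℕ, (c⁻¹ • Z) ^ k := by
    have h1 := mul_neg_geom_series (c⁻¹ • Z) hZn
    ext z
    have h2 := congrArg (fun h => h z) h1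
    simp only [hZ, ContinuousMap.mul_apply, ContinuousMap.sub_apply, ContinuousMap.one_apply,
      ContinuousMap.smul_apply, ContinuousMap.coe_mk, PiLp.proj_apply, smul_eq_mul] at h2
    rw [hg, ContinuousMap.smul_apply, smul_eq_mul]
    have h3 : (1 - c⁻¹ * z.1 i) = c⁻¹ * (c - z.1 i) := by field_simp
    rw [h3, mul_assoc, mul_left_comm] at h2
    exact (eq_inv_of_mul_eq_one_right h2).symm
  rw [this]
  exact (expAlgebra _ R).smul_mem hT _

theorem comp_coordProj_mem_expAlgebra {n : ℕ} {R : ℝ} (hR : 0 ≤ R) (s : Finset (Fin n)) :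
    ∀ (f : EuclideanSpace ℂ (Fin n) → ℂ) (hf : Differentiable ℂ f),
      (⟨fun z => f (coordProj s z),
        (hf.comp (differentiable_coordProj s)).continuous.comp continuous_subtype_val⟩ :
        C(closedBall (0 : EuclideanSpace ℂ (Fin n)) R, ℂ)) ∈ expAlgebra _ R := by
  classical
  induction s using Finset.induction_on with
  | empty =>
    intro f hf
    convert (expAlgebra (EuclideanSpace ℂ (Fin n)) R).algebraMap_mem (f 0) using 1
    ext z
    simp [coordProj]
  | insert i s hi ih =>
    intro f hf
    have hfc := hf.continuous
    have hpc := (differentiable_coordProj s).continuous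
    set γ : ℝ → ℂ := circleMap 0 (R + 1) with hγ
    have hγn : ∀ t, ‖γ t‖ = R + 1 := fun t => by simp [hγ, abs_of_pos (show 0 < R + 1 by linarith)]
    have hne : ∀ t (z : closedBall (0 : EuclideanSpace ℂ (Fin n)) R), γ t - z.1 i ≠ 0 := by
      intro t z h
      have h1 := (PiLp.norm_apply_le z.1 i).trans (mem_closedBall_zero_iff.mp z.2)
      rw [← sub_eq_zero.mp h, hγn] at h1
      linarith
    have hγc : Continuous γ := continuous_circleMap 0 (R + 1)
    set e : EuclideanSpace ℂ (Fin n) := EuclideanSpace.single i (1 : ℂ) with he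
    let I : C(ℝ × closedBall (0 : EuclideanSpace ℂ (Fin n)) R, ℂ) :=
      ⟨fun p => (γ p.1 - p.2.1 i)⁻¹, by
        refine Continuous.inv₀ (by fun_prop) fun p => hne p.1 p.2⟩
    let F : C(ℝ × closedBall (0 : EuclideanSpace ℂ (Fin n)) R, ℂ) :=
      ⟨fun p => f (coordProj s p.2.1 + γ p.1 • e), by fun_prop⟩
    let h : ℝ → C(closedBall (0 : EuclideanSpace ℂ (Fin n)) R, ℂ) :=
      fun t => deriv γ t • (I.curry t * F.curry t)
    have hderiv : Continuous (deriv γ) := by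
      have : deriv γ = fun t => γ t * Complex.I := by
        ext t; simp [hγ, deriv_circleMap]
      rw [this]; fun_prop
    have hcont : Continuous h :=
      hderiv.smul (I.curry.continuous.mul F.curry.continuous)
    have hmem : ∀ t, h t ∈ Subalgebra.toSubmodule (expAlgebra (EuclideanSpace ℂ (Fin n)) R) := by
      intro t
      refine (expAlgebra _ R).smul_mem (mul_mem ?_ ?_) _
      · exact inv_sub_coord_mem_expAlgebra hR (lt_add_one R) i (hγn t) fun z => rfl
      · exact ih (fun z => f (z + γ t • e)) (by fun_prop)
    have hint := Submodule.intervalIntegral_mem_of_isClosed _ (isClosed_expAlgebra R) hcont hmem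
      0 (2 * Real.pi)
    have hfin := (expAlgebra (EuclideanSpace ℂ (Fin n)) R).smul_mem hint
      (2 * Real.pi * Complex.I : ℂ)⁻¹
    convert hfin using 1
    ext z
    have hev := (ContinuousMap.evalCLM ℂ z).intervalIntegral_comp_comm
      (hcont.intervalIntegrable (μ := MeasureTheory.volume) 0 (2 * Real.pi))
    have hd : Differentiable ℂ fun w : ℂ => f (coordProj s z.1 + w • e) := by fun_prop
    have hw : z.1 i ∈ ball (0 : ℂ) (R + 1) := by
      rw [mem_ball_zero_iff]
      exact ((PiLp.norm_apply_le z.1 i).trans (mem_closedBall_zero_iff.mp z.2)).trans_lt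
        (lt_add_one R)
    have hcauchy := hd.diffContOnCl.two_pi_i_inv_smul_circleIntegral_sub_inv_smul hw
    have hproj : coordProj (insert i s) z.1 = coordProj s z.1 + z.1 i • e := by
      simp [coordProj, Finset.sum_insert hi, add_comm, he]
    simp only [ContinuousMap.coe_mk, hproj, ContinuousMap.smul_apply]
    rw [← hcauchy]
    congr 1

/-- Finite linear combinations of exponentials of linear functionals approximate every entire
function uniformly on balls. -/
theorem Differentiable.exists_expSum_approx {n : ℕ} {f : EuclideanSpace ℂ (Fin n) → ℂ}
    (hf : Differentiable ℂ f) {R ε : ℝ} (hR : 0 ≤ R) (hε : 0 < ε) :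
    ∃ c : (EuclideanSpace ℂ (Fin n) →L[ℂ] ℂ) →₀ ℂ, ∀ z, ‖z‖ ≤ R →
      ‖f z - ∑ l ∈ c.support, c l * Complex.exp (l z)‖ ≤ ε := by
  obtain ⟨c, hc⟩ := exists_finsupp_of_mem_expAlgebra
    (comp_coordProj_mem_expAlgebra hR Finset.univ f hf) hε
  refine ⟨c, fun z hz => ?_⟩
  have hz' : coordProj Finset.univ z = z := by
    ext j
    simp [coordProj, Finset.sum_apply, Pi.single_apply]
  simpa [hz'] using hc ⟨z, mem_closedBall_zero_iff.mpr hz⟩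

end ExponentialApproximation

section Hull

variable {n : ℕ} {K : Set (EuclideanSpace ℂ (Fin n))}

theorem isClosed_holomorphicHull (K : Set (EuclideanSpace ℂ (Fin n))) :
    IsClosed (holomorphicHull K) := by
  simp only [holomorphicHull, ofPred_forall]
  exact isClosed_iInter fun f => isClosed_iInter fun hf =>
    isClosed_le hf.continuous.norm continuous_const

theorem IsCompact.norm_le_sSup_image {X : Type*} [TopologicalSpace X] {K : Set X}
    (hK : IsCompact K) {f : X → ℂ} (hf : Continuous f) {w : X} (hw : w ∈ K) :
    ‖f w‖ ≤ sSup ((fun w => ‖f w‖) '' K) :=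
  le_csSup (hK.image hf.norm).bddAbove (mem_image_of_mem _ hw)

theorem subset_holomorphicHull (hK : IsCompact K) : K ⊆ holomorphicHull K :=
  fun _ hw _ hf => hK.norm_le_sSup_image hf.continuous hw

theorem isBounded_holomorphicHull (K : Set (EuclideanSpace ℂ (Fin n))) :
    Bornology.IsBounded (holomorphicHull K) := by
  rw [isBounded_iff_forall_norm_le]
  refine ⟨∑ i, sSup ((fun w : EuclideanSpace ℂ (Fin n) => ‖w i‖) '' K), fun z hz => ?_⟩
  have h1 : ‖z‖ ≤ ∑ i, ‖z i‖ := by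
    have h2 : z = ∑ i, z i • EuclideanSpace.single i (1 : ℂ) := by
      ext j
      simp [Finset.sum_apply, Pi.single_apply]
    calc ‖z‖ = ‖∑ i, z i • EuclideanSpace.single i (1 : ℂ)‖ := by rw [← h2]
      _ ≤ ∑ i, ‖z i • EuclideanSpace.single i (1 : ℂ)‖ := norm_sum_le _ _
      _ = ∑ i, ‖z i‖ := by simp [norm_smul]
  exact h1.trans (Finset.sum_le_sum fun i _ => hz (fun w => w i) (by fun_prop))

theorem isPreconnected_compl_closedBall_of_one_lt_rank {F : Type*} [NormedAddCommGroup F]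
    [NormedSpace ℝ F] (h : 1 < Module.rank ℝ F) {R : ℝ} (hR : 0 ≤ R) :
    IsPreconnected (closedBall (0 : F) R)ᶜ := by
  have himg : (closedBall (0 : F) R)ᶜ =
      (fun p : ℝ × F => p.1 • p.2) '' (Ioi R ×ˢ sphere (0 : F) 1) := by
    ext z
    simp only [mem_compl_iff, mem_closedBall_zero_iff, not_le, mem_image, mem_prod, mem_Ioi,
      mem_sphere_zero_iff_norm, Prod.exists]
    constructor
    · intro hz
      have hz0 : ‖z‖ ≠ 0 := (hR.trans_lt hz).ne'
      exact ⟨‖z‖, ‖z‖⁻¹ • z, ⟨hz, by simp [norm_smul, hz0]⟩, by simp [smul_smul, hz0]⟩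
    · rintro ⟨t, w, ⟨ht, hw⟩, rfl⟩
      rw [norm_smul, hw, mul_one]
      exact ht.trans_le (le_abs_self t)
  rw [himg]
  exact (isPreconnected_Ioi.prod (isPreconnected_sphere h 0 1)).image _
    (continuous_fst.smul continuous_snd).continuousOn

/-- The complement of the holomorphically convex hull has no bounded components. -/
theorem not_isBounded_connectedComponentIn_compl_holomorphicHull [NeZero n]
    {p : EuclideanSpace ℂ (Fin n)} (hp : p ∉ holomorphicHull K) :
    ¬ Bornology.IsBounded (connectedComponentIn (holomorphicHull K)ᶜ p) := by
  intro hb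
  set U := (holomorphicHull K)ᶜ with hU
  have hUo : IsOpen U := (isClosed_holomorphicHull K).isOpen_compl
  set C := connectedComponentIn U p with hC
  have hfr : frontier C ⊆ holomorphicHull K := by
    intro w hw
    by_contra hwU
    have hwo : IsOpen (connectedComponentIn U w) := hUo.connectedComponentIn
    have hww : w ∈ connectedComponentIn U w := mem_connectedComponentIn hwU
    obtain ⟨q, hq1, hq2⟩ := mem_closure_iff.mp (frontier_subset_closure hw) _ hwo hww
    have h1 := connectedComponentIn_eq hq1
    have h2 := connectedComponentIn_eq hq2
    have hwC : w ∈ C := by rw [hC, h2, ← h1]; exact hww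
    have := hUo.connectedComponentIn (x := p)
    rw [← hC] at this
    rw [this.frontier_eq] at hw
    exact hw.2 hwC
  apply hp
  intro f hf
  exact Complex.norm_le_of_forall_mem_frontier_norm_le hb hf.diffContOnCl
    (fun z hz => hfr hz f hf) (subset_closure (mem_connectedComponentIn hp))

theorem isPreconnected_compl_holomorphicHull [NeZero n] :
    IsPreconnected (holomorphicHull K)ᶜ := by
  obtain ⟨R, hR0, hR⟩ := (isBounded_holomorphicHull K).subset_closedBall_lt 0 0
  have hrank : 1 < Module.rank ℝ (EuclideanSpace ℂ (Fin n)) := by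
    rw [← Module.finrank_eq_rank, finrank_real_of_complex, finrank_euclideanSpace_fin]
    have := NeZero.pos n
    exact_mod_cast (by omega : 1 < 2 * n)
  have hout := isPreconnected_compl_closedBall_of_one_lt_rank hrank hR0.le
  have hsub : (closedBall (0 : EuclideanSpace ℂ (Fin n)) R)ᶜ ⊆ (holomorphicHull K)ᶜ :=
    compl_subset_compl.mpr hR
  have key : ∀ p ∉ holomorphicHull K, ∃ q ∈ (closedBall (0 : EuclideanSpace ℂ (Fin n)) R)ᶜ,
      q ∈ connectedComponentIn (holomorphicHull K)ᶜ p := by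
    intro p hp
    by_contra! hcon
    refine not_isBounded_connectedComponentIn_compl_holomorphicHull hp
      ((isBounded_closedBall (x := 0) (r := R)).subset fun q hq => ?_)
    by_contra hq'
    exact hcon q hq' hq
  refine isPreconnected_of_forall_pair fun x hx y hy => ?_
  obtain ⟨p, hp, hpx⟩ := key x hx
  obtain ⟨q, hq, hqy⟩ := key y hy
  have h1 := hout.subset_connectedComponentIn hp hsub hq
  rw [← connectedComponentIn_eq hpx] at h1
  refine ⟨connectedComponentIn (holomorphicHull K)ᶜ x, connectedComponentIn_subset _ _,
    mem_connectedComponentIn hx, ?_, isPreconnected_connectedComponentIn⟩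
  rw [connectedComponentIn_eq h1, ← connectedComponentIn_eq hqy]
  exact mem_connectedComponentIn hy

end Hull

section Automorphisms

variable {n : ℕ}

theorem IsHolomorphicAutomorphism.id :
    IsHolomorphicAutomorphism (fun z : EuclideanSpace ℂ (Fin n) => z) :=
  ⟨differentiable_id, fun z => z, differentiable_id, fun _ => rfl, fun _ => rfl⟩

theorem IsHolomorphicAutomorphism.comp
    {g h : EuclideanSpace ℂ (Fin n) → EuclideanSpace ℂ (Fin n)}
    (hg : IsHolomorphicAutomorphism g) (hh : IsHolomorphicAutomorphism h) :
    IsHolomorphicAutomorphism (g ∘ h) := by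
  obtain ⟨dg, gi, dgi, lg, rg⟩ := hg
  obtain ⟨dh, hi, dhi, lh, rh⟩ := hh
  exact ⟨dg.comp dh, hi ∘ gi, dhi.comp dgi, lg.comp lh, rg.comp rh⟩

theorem IsHolomorphicAutomorphism.iterate
    {g : EuclideanSpace ℂ (Fin n) → EuclideanSpace ℂ (Fin n)}
    (hg : IsHolomorphicAutomorphism g) (k : ℕ) : IsHolomorphicAutomorphism g^[k] := by
  induction k with
  | zero => exact IsHolomorphicAutomorphism.id
  | succ k ih => exact ih.comp hg

/-- Shears are automorphisms. -/
theorem isHolomorphicAutomorphism_shear (l : EuclideanSpace ℂ (Fin n) →L[ℂ] ℂ)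
    {h : ℂ → EuclideanSpace ℂ (Fin n)} (hh : Differentiable ℂ h) (hl : ∀ w, l (h w) = 0) :
    IsHolomorphicAutomorphism (fun z => z + h (l z)) := by
  refine ⟨by fun_prop, fun z => z - h (l z), by fun_prop, fun z => ?_, fun z => ?_⟩
  · simp [hl]
  · simp [hl]

/-- A vector field is *approximately integrable* if, uniformly on balls, the Euler steps
`z ↦ z + t V(z)` are approximated to second order by holomorphic automorphisms. -/
def ApproximatelyIntegrable
    (V : EuclideanSpace ℂ (Fin n) → EuclideanSpace ℂ (Fin n)) : Prop :=
  ∀ R : ℝ, ∃ C : ℝ, ∀ t : ℝ, 0 ≤ t → t ≤ 1 → ∃ Φ, IsHolomorphicAutomorphism Φ ∧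
    ∀ z, ‖z‖ ≤ R → ‖Φ z - (z + t • V z)‖ ≤ C * t ^ 2

theorem ContDiff.exists_lipschitz_on_closedBall {E F : Type*} [NormedAddCommGroup E]
    [NormedSpace ℝ E] [ProperSpace E] [NormedAddCommGroup F] [NormedSpace ℝ F] {W : E → F}
    (hW : ContDiff ℝ 1 W) (R : ℝ) :
    ∃ L : ℝ, 0 ≤ L ∧ ∀ z w : E, ‖z‖ ≤ R → ‖w‖ ≤ R → ‖W z - W w‖ ≤ L * ‖z - w‖ := by
  obtain ⟨L, hL⟩ := hW.locallyLipschitz.locallyLipschitzOn.exists_lipschitzOnWith_of_compact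
    (isCompact_closedBall (0 : E) R)
  exact ⟨L, L.2, fun z w hz hw => hL.norm_sub_le (mem_closedBall_zero_iff.mpr hz)
    (mem_closedBall_zero_iff.mpr hw)⟩

theorem ApproximatelyIntegrable.add_shear
    {V : EuclideanSpace ℂ (Fin n) → EuclideanSpace ℂ (Fin n)} (hV : ApproximatelyIntegrable V)
    (hVc : Continuous V) (l : EuclideanSpace ℂ (Fin n) →L[ℂ] ℂ)
    {h : ℂ → EuclideanSpace ℂ (Fin n)} (hh : Differentiable ℂ h) (hl : ∀ w, l (h w) = 0) :
    ApproximatelyIntegrable (fun z => V z + h (l z)) := by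
  intro R
  obtain ⟨C, hC⟩ := hV R
  obtain ⟨B, hB⟩ :=
    (isCompact_closedBall (0 : EuclideanSpace ℂ (Fin n)) R).exists_bound_of_continuousOn
    hVc.continuousOn
  have hW : ContDiff ℝ 1 (fun z : EuclideanSpace ℂ (Fin n) => h (l z)) := by
    have : ContDiff ℂ 1 (fun z : EuclideanSpace ℂ (Fin n) => h (l z)) :=
      hh.contDiff.comp l.contDiff
    exact this.restrict_scalars ℝ
  obtain ⟨L, hL0, hL⟩ := hW.exists_lipschitz_on_closedBall (R + |B| + |C|)
  refine ⟨|C| + L * (|B| + |C|), fun t ht0 ht1 => ?_⟩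
  obtain ⟨Φ, hΦ, hΦe⟩ := hC t ht0 ht1
  have hsh : IsHolomorphicAutomorphism (fun z => z + (t : ℂ) • h (l z)) :=
    isHolomorphicAutomorphism_shear l (h := fun w => (t : ℂ) • h w) (by fun_prop) (by simp [hl])
  refine ⟨_, hsh.comp hΦ, fun z hz => ?_⟩
  have h1 := hΦe z hz
  have hBz : ‖V z‖ ≤ |B| := (hB z (mem_closedBall_zero_iff.mpr hz)).trans (le_abs_self B)
  have h1' : ‖Φ z - (z + t • V z)‖ ≤ |C| * t ^ 2 :=
    h1.trans (mul_le_mul_of_nonneg_right (le_abs_self C) (sq_nonneg t))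
  have h2 : ‖Φ z - z‖ ≤ t * (|B| + |C|) := by
    calc ‖Φ z - z‖ = ‖(Φ z - (z + t • V z)) + t • V z‖ := by congr 1; abel
      _ ≤ |C| * t ^ 2 + t * |B| := by
        refine (norm_add_le _ _).trans (add_le_add h1' ?_)
        rw [norm_smul, Real.norm_of_nonneg ht0]
        gcongr
      _ ≤ t * (|B| + |C|) := by
        nlinarith [abs_nonneg C,
          mul_nonneg (abs_nonneg C) (mul_nonneg ht0 (sub_nonneg.mpr ht1))]
  have h2' : ‖Φ z - z‖ ≤ |B| + |C| := h2.trans (by nlinarith [abs_nonneg B, abs_nonneg C])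
  have h3 : ‖Φ z‖ ≤ R + |B| + |C| := by
    have := norm_add_le (Φ z - z) z
    rw [sub_add_cancel] at this
    linarith
  have h4 := hL (Φ z) z h3 (by linarith [abs_nonneg B, abs_nonneg C])
  have hcoe : (t : ℂ) • h (l (Φ z)) = t • h (l (Φ z)) := Complex.coe_smul _ _
  have h5 : (Φ z + (t : ℂ) • h (l (Φ z))) - (z + t • (V z + h (l z))) =
      (Φ z - (z + t • V z)) + t • (h (l (Φ z)) - h (l z)) := by
    rw [hcoe, smul_add, smul_sub]; abel
  simp only [Function.comp_apply]
  rw [h5]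
  calc _ ≤ |C| * t ^ 2 + t * (L * (t * (|B| + |C|))) := by
        refine (norm_add_le _ _).trans (add_le_add h1' ?_)
        rw [norm_smul, Real.norm_of_nonneg ht0]
        gcongr
        exact h4.trans (by gcongr)
    _ = _ := by ring

theorem approximatelyIntegrable_sum_exp (s : Finset (EuclideanSpace ℂ (Fin n) →L[ℂ] ℂ))
    (w : (EuclideanSpace ℂ (Fin n) →L[ℂ] ℂ) → EuclideanSpace ℂ (Fin n))
    (hw : ∀ l : EuclideanSpace ℂ (Fin n) →L[ℂ] ℂ, l (w l) = 0) :
    ApproximatelyIntegrable (fun z => ∑ l ∈ s, Complex.exp (l z) • w l) := by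
  classical
  induction s using Finset.induction_on with
  | empty =>
    exact fun R => ⟨0, fun t _ _ => ⟨_, IsHolomorphicAutomorphism.id, by simp⟩⟩
  | insert l s hls ih =>
    have := ih.add_shear (by fun_prop) l (h := fun a => Complex.exp a • w l) (by fun_prop)
      (by simp [hw])
    simpa [Finset.sum_insert hls, add_comm] using this

/-- Euler's method: an approximately integrable vector field which is nearly equal to `v` near the
segment `[z, z + v]`, for all `(z, v)` in a bounded set, yields an automorphism which
nearly maps `z` to `z + v`. -/
theorem ApproximatelyIntegrable.exists_automorphism
    {V : EuclideanSpace ℂ (Fin n) → EuclideanSpace ℂ (Fin n)} (hV : ApproximatelyIntegrable V)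
    {T : Set (EuclideanSpace ℂ (Fin n) × EuclideanSpace ℂ (Fin n))} {R ε : ℝ} (hε : 0 < ε)
    (hT : ∀ p ∈ T, ‖p.1‖ ≤ R ∧ ‖p.2‖ ≤ R)
    (hVT : ∀ p ∈ T, ∀ t : ℝ, 0 ≤ t → t ≤ 1 → ∀ w, ‖w - (p.1 + t • p.2)‖ ≤ 2 * ε →
      ‖V w - p.2‖ ≤ ε) :
    ∃ Ψ, IsHolomorphicAutomorphism Ψ ∧ ∀ p ∈ T, ‖Ψ p.1 - (p.1 + p.2)‖ ≤ 2 * ε := by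
  obtain ⟨C, hC⟩ := hV (2 * R + 2 * ε)
  obtain ⟨M, hM⟩ := exists_nat_gt (max 0 (C / ε))
  have hM0 : (0 : ℝ) < M := (le_max_left _ _).trans_lt hM
  have hMC : C ≤ ε * M := by
    have := (le_max_right 0 (C / ε)).trans hM.le
    rwa [div_le_iff₀' hε] at this
  have hM1 : (1 : ℝ) / M ≤ 1 := by
    rw [div_le_one hM0]
    exact_mod_cast Nat.pos_of_ne_zero (by rintro rfl; simp at hM0)
  obtain ⟨Φ, hΦ, hΦe⟩ := hC (1 / M) (by positivity) hM1
  refine ⟨Φ^[M], hΦ.iterate M, fun p hp => ?_⟩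
  have key : ∀ j : ℕ, j ≤ M →
      ‖Φ^[j] p.1 - (p.1 + ((j : ℝ) / M) • p.2)‖ ≤ (j / M) * (2 * ε) := by
    intro j
    induction j with
    | zero => intro _; simp
    | succ j ih =>
      intro hj
      have ih := ih (by omega)
      have hjM : (j : ℝ) / M ≤ 1 := by
        rw [div_le_one hM0]; exact_mod_cast (by omega : j ≤ M)
      have hj0 : (0 : ℝ) ≤ (j : ℝ) / M := by positivity
      set w := Φ^[j] p.1 with hw
      have hwd : ‖w - (p.1 + ((j : ℝ) / M) • p.2)‖ ≤ 2 * ε := ih.trans (by nlinarith)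
      have hwR : ‖w‖ ≤ 2 * R + 2 * ε := by
        have h1 : ‖p.1 + ((j : ℝ) / M) • p.2‖ ≤ R + R := by
          refine (norm_add_le _ _).trans (add_le_add (hT p hp).1 ?_)
          rw [norm_smul, Real.norm_of_nonneg hj0]
          nlinarith [(hT p hp).2, norm_nonneg p.2]
        have := norm_add_le (w - (p.1 + ((j : ℝ) / M) • p.2)) (p.1 + ((j : ℝ) / M) • p.2)
        rw [sub_add_cancel] at this
        linarith
      have h1 := hΦe w hwR
      have h2 := hVT p hp _ hj0 hjM w hwd
      rw [Function.iterate_succ_apply', ← hw]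
      have hsplit : Φ w - (p.1 + (((j + 1 : ℕ) : ℝ) / M) • p.2) =
          (Φ w - (w + (1 / M : ℝ) • V w)) + (1 / M : ℝ) • (V w - p.2) +
            (w - (p.1 + ((j : ℝ) / M) • p.2)) := by
        rw [Nat.cast_succ, add_div, add_smul, smul_sub]; abel
      rw [hsplit]
      calc _ ≤ C * (1 / M) ^ 2 + (1 / M) * ε + (j / M) * (2 * ε) := by
            refine (norm_add_le _ _).trans (add_le_add ((norm_add_le _ _).trans
              (add_le_add h1 ?_)) ih)
            rw [norm_smul, Real.norm_of_nonneg (by positivity)]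
            gcongr
        _ ≤ (ε * M) * (1 / M) ^ 2 + (1 / M) * ε + (j / M) * (2 * ε) := by gcongr
        _ = _ := by push_cast; field_simp; ring
  have := key M le_rfl
  simpa [div_self hM0.ne'] using this

end Automorphisms

section LocalMoves

/-- The cubic `3 * w ^ 2 - 2 * w ^ 3`, for which `0` and `1` are superattracting fixed points. -/
def smoothstep (w : ℂ) : ℂ := 3 * w ^ 2 - 2 * w ^ 3

theorem differentiable_smoothstep : Differentiable ℂ smoothstep := by
  unfold smoothstep
  fun_prop

theorem norm_smoothstep_iterate_le {w : ℂ} (hw : ‖w‖ ≤ 1 / 10) (k : ℕ) :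
    ‖smoothstep^[k] w‖ ≤ (1 / 2) ^ k * (1 / 10) := by
  induction k with
  | zero => simpa using hw
  | succ k ih =>
    rw [Function.iterate_succ_apply']
    set a := smoothstep^[k] w
    have hk : ((1 : ℝ) / 2) ^ k ≤ 1 := pow_le_one₀ (by norm_num) (by norm_num)
    have ha : ‖a‖ ≤ 1 / 10 := ih.trans (by linarith)
    calc ‖smoothstep a‖ ≤ ‖3 * a ^ 2‖ + ‖2 * a ^ 3‖ := norm_sub_le _ _
      _ = 3 * ‖a‖ ^ 2 + 2 * ‖a‖ ^ 3 := by simp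
      _ ≤ 1 / 2 * ‖a‖ := by
        nlinarith [norm_nonneg a, mul_nonneg (norm_nonneg a) (norm_nonneg a),
          mul_nonneg (norm_nonneg a) (sub_nonneg.mpr ha),
          mul_nonneg (mul_nonneg (norm_nonneg a) (norm_nonneg a)) (sub_nonneg.mpr ha)]
      _ ≤ (1 / 2) ^ (k + 1) * (1 / 10) := by rw [pow_succ]; linarith

theorem smoothstep_iterate_one_sub (w : ℂ) (k : ℕ) :
    smoothstep^[k] (1 - w) = 1 - smoothstep^[k] w := by
  have h : Function.Semiconj (fun a : ℂ => 1 - a) smoothstep smoothstep := fun a => by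
    simp only [smoothstep]; ring
  exact ((h.iterate_right k) w).symm

theorem norm_smoothstep_iterate_sub_one_le {w : ℂ} (hw : ‖w - 1‖ ≤ 1 / 10) (k : ℕ) :
    ‖smoothstep^[k] w - 1‖ ≤ (1 / 2) ^ k * (1 / 10) := by
  have h := smoothstep_iterate_one_sub (1 - w) k
  rw [sub_sub_cancel] at h
  rw [h, sub_sub_cancel_left, norm_neg]
  exact norm_smoothstep_iterate_le (by rwa [norm_sub_rev]) k

variable {n : ℕ} {K : Set (EuclideanSpace ℂ (Fin n))} {p : EuclideanSpace ℂ (Fin n)}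

theorem exists_separating_of_notMem_holomorphicHull (hK : IsCompact K)
    (hp : p ∉ holomorphicHull K) :
    ∃ f : EuclideanSpace ℂ (Fin n) → ℂ, Differentiable ℂ f ∧ ∃ ρ > 0,
      (∀ z, ‖z - p‖ ≤ ρ → ‖f z - 1‖ ≤ 1 / 10) ∧
      ∀ w ∈ K, ∀ z, ‖z - w‖ ≤ ρ → ‖f z‖ ≤ 1 / 10 := by
  simp only [holomorphicHull, mem_ofPred_eq, not_forall, not_le] at hp
  obtain ⟨f, hf, hlt⟩ := hp
  set S := sSup ((fun w => ‖f w‖) '' K) with hS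
  have hS0 : 0 ≤ S := Real.sSup_nonneg (by rintro _ ⟨w, _, rfl⟩; exact norm_nonneg _)
  have hfp : 0 < ‖f p‖ := hS0.trans_lt hlt
  have hfp0 : f p ≠ 0 := norm_pos_iff.mp hfp
  obtain ⟨N, hN⟩ := exists_pow_lt_of_lt_one (show (0 : ℝ) < 1 / 10 by norm_num)
    ((div_lt_one hfp).mpr hlt)
  set g : EuclideanSpace ℂ (Fin n) → ℂ := fun z => ((f p)⁻¹ * f z) ^ N with hg
  have hgd : Differentiable ℂ g := (hf.const_mul _).pow N
  have hgK : K ⊆ {z | ‖g z‖ < 1 / 10} := by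
    intro w hw
    refine lt_of_le_of_lt ?_ hN
    simp only [hg, norm_pow, norm_mul, norm_inv]
    rw [← div_eq_inv_mul]
    gcongr
    exact hK.norm_le_sSup_image hf.continuous hw
  obtain ⟨δ, hδ, hδK⟩ := hK.exists_cthickening_subset_open
    (isOpen_lt hgd.continuous.norm continuous_const) hgK
  have hgp : g p = 1 := by simp [hg, hfp0]
  obtain ⟨δ', hδ', hδp⟩ := Metric.continuousAt_iff.mp hgd.continuous.continuousAt (1 / 10)
    (by norm_num : (0 : ℝ) < 1 / 10)
  refine ⟨g, hgd, min δ (δ' / 2), by positivity, fun z hz => ?_, fun w hw z hz => ?_⟩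
  · have := hδp (x := z) (by
      rw [dist_eq_norm]; linarith [min_le_right δ (δ' / 2)])
    rw [dist_eq_norm, hgp] at this
    exact this.le
  · have : z ∈ cthickening δ K := mem_cthickening_of_dist_le z w δ K hw (by
      rw [dist_eq_norm]; exact hz.trans (min_le_left _ _))
    exact le_of_lt (hδK this)

/-- Outside of the hull of `K`, one can find a ball on which a linear functional is
approximated by exponential sums which are small near `K`. -/
theorem exists_expSum_of_notMem_holomorphicHull (hK : IsCompact K)
    (hp : p ∉ holomorphicHull K) :
    ∃ ρ > 0, ∀ (m : EuclideanSpace ℂ (Fin n) →L[ℂ] ℂ) (ε : ℝ), 0 < ε →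
      ∃ c : (EuclideanSpace ℂ (Fin n) →L[ℂ] ℂ) →₀ ℂ,
        (∀ z, ‖z - p‖ ≤ ρ → ‖∑ l ∈ c.support, c l * Complex.exp (l z) - m z‖ ≤ ε) ∧
        ∀ w ∈ K, ∀ z, ‖z - w‖ ≤ ρ → ‖∑ l ∈ c.support, c l * Complex.exp (l z)‖ ≤ ε := by
  obtain ⟨f, hf, ρ, hρ, hfp, hfK⟩ := exists_separating_of_notMem_holomorphicHull hK hp
  refine ⟨ρ, hρ, fun m ε hε => ?_⟩
  obtain ⟨R₀, hR₀⟩ := hK.isBounded.exists_norm_le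
  set R := max R₀ ‖p‖ + ρ with hR
  have hR0 : 0 ≤ R := add_nonneg ((norm_nonneg p).trans (le_max_right _ _)) hρ.le
  set D := ‖m‖ * R with hD
  have hD0 : 0 ≤ D := by positivity
  obtain ⟨k, hk⟩ := exists_pow_lt_of_lt_one
    (show 0 < ε / (D + 1) by positivity) (show (1 / 2 : ℝ) < 1 by norm_num)
  have hkε : ((1 / 2) ^ k * (1 / 10)) * D ≤ ε / 2 := by
    rw [lt_div_iff₀ (by positivity)] at hk
    have : 0 ≤ ((1 : ℝ) / 2) ^ k := by positivity
    nlinarith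
  have hsd : Differentiable ℂ smoothstep^[k] := differentiable_smoothstep.iterate k
  obtain ⟨c, hc⟩ := Differentiable.exists_expSum_approx
    (f := fun z => smoothstep^[k] (f z) * m z) ((hsd.comp hf).mul m.differentiable)
    hR0 (half_pos hε)
  have hnorm : ∀ z w : EuclideanSpace ℂ (Fin n), ‖w‖ ≤ max R₀ ‖p‖ → ‖z - w‖ ≤ ρ → ‖z‖ ≤ R := by
    intro z w hw hzw
    have := norm_add_le (z - w) w
    rw [sub_add_cancel] at this
    linarith
  have hm : ∀ z, ‖z‖ ≤ R → ‖m z‖ ≤ D := fun z hz =>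
    (m.le_opNorm z).trans (mul_le_mul_of_nonneg_left hz (norm_nonneg m))
  refine ⟨c, fun z hz => ?_, fun w hw z hz => ?_⟩
  · have hzR := hnorm z p (le_max_right _ _) hz
    have h1 := hc z hzR
    rw [norm_sub_rev] at h1
    have h2 : ‖(smoothstep^[k] (f z) - 1) * m z‖ ≤ ε / 2 := by
      rw [norm_mul]
      exact (mul_le_mul (norm_smoothstep_iterate_sub_one_le (hfp z hz) k) (hm z hzR)
        (norm_nonneg _) (by positivity)).trans hkε
    calc _ = ‖(∑ l ∈ c.support, c l * Complex.exp (l z) - smoothstep^[k] (f z) * m z) +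
          (smoothstep^[k] (f z) - 1) * m z‖ := by congr 1; ring
      _ ≤ ε / 2 + ε / 2 := (norm_add_le _ _).trans (add_le_add h1 h2)
      _ = ε := add_halves ε
  · have hzR := hnorm z w ((hR₀ w hw).trans (le_max_left _ _)) hz
    have h1 := hc z hzR
    rw [norm_sub_rev] at h1
    have h2 : ‖smoothstep^[k] (f z) * m z‖ ≤ ε / 2 := by
      rw [norm_mul]
      exact (mul_le_mul (norm_smoothstep_iterate_le (hfK w hw z hz) k) (hm z hzR)
        (norm_nonneg _) (by positivity)).trans hkε
    calc _ = ‖(∑ l ∈ c.support, c l * Complex.exp (l z) - smoothstep^[k] (f z) * m z) +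
          smoothstep^[k] (f z) * m z‖ := by congr 1; ring
      _ ≤ ε / 2 + ε / 2 := (norm_add_le _ _).trans (add_le_add h1 h2)
      _ = ε := add_halves ε

/-- Cauchy's estimate for directional derivatives. -/
theorem Differentiable.norm_fderiv_apply_le {E : Type*} [NormedAddCommGroup E] [NormedSpace ℂ E]
    {h : E → ℂ} (hd : Differentiable ℂ h) {w : E} {r C : ℝ} (hr : 0 < r)
    (hC : ∀ z, ‖z - w‖ ≤ r → ‖h z‖ ≤ C) (u : E) : ‖fderiv ℂ h w u‖ ≤ C / r * ‖u‖ := by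
  rcases eq_or_ne u 0 with rfl | hu
  · simp
  have hu' : 0 < ‖u‖ := norm_pos_iff.mpr hu
  have hline : HasDerivAt (fun t : ℂ => h (w + t • u)) (fderiv ℂ h w u) 0 := by
    have h1 : HasDerivAt (fun t : ℂ => w + t • u) u 0 := by
      simpa using ((hasDerivAt_id (0 : ℂ)).smul_const u).const_add w
    have h2 : HasFDerivAt h (fderiv ℂ h w) (w + (0 : ℂ) • u) := by
      simpa using (hd w).hasFDerivAt
    exact h2.comp_hasDerivAt 0 h1
  have hdl : Differentiable ℂ (fun t : ℂ => h (w + t • u)) := by fun_prop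
  have := Complex.norm_deriv_le_of_forall_mem_sphere_norm_le (c := 0) (R := r / ‖u‖) (C := C)
    (by positivity) hdl.diffContOnCl fun t ht => hC _ (by
      rw [mem_sphere_zero_iff_norm] at ht
      rw [add_sub_cancel_left, norm_smul, ht, div_mul_cancel₀ _ hu'.ne'])
  rw [hline.deriv] at this
  rwa [div_div_eq_mul_div, mul_div_right_comm] at this

theorem exists_clm_eq_zero_and_eq_one (hn : 2 ≤ n) {v : EuclideanSpace ℂ (Fin n)} (hv : v ≠ 0) :
    ∃ (m : EuclideanSpace ℂ (Fin n) →L[ℂ] ℂ) (u : EuclideanSpace ℂ (Fin n)),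
      m v = 0 ∧ m u = 1 := by
  obtain ⟨i, hi⟩ : ∃ i, v i ≠ 0 := by
    by_contra! h
    exact hv (by ext i; simpa using h i)
  have : Nontrivial (Fin n) := Fin.nontrivial_iff_two_le.mpr hn
  obtain ⟨j, hj⟩ := exists_ne i
  refine ⟨EuclideanSpace.proj (𝕜 := ℂ) j - (v j / v i) • EuclideanSpace.proj (𝕜 := ℂ) i,
    EuclideanSpace.single j 1, ?_, ?_⟩
  · simp [hi]
  · simp [hj.symm]

/-- Near a point outside of the hull of `K`, points can be moved approximately to each other by
automorphisms close to the identity on `K`. -/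
theorem exists_automorphism_near_of_notMem_holomorphicHull (hn : 2 ≤ n) (hK : IsCompact K)
    (hp : p ∉ holomorphicHull K) :
    ∃ ρ > 0, ∀ a b, ‖a - p‖ ≤ ρ → ‖b - p‖ ≤ ρ → ∀ η > 0, ∃ Ψ,
      IsHolomorphicAutomorphism Ψ ∧ (∀ z ∈ K, ‖Ψ z - z‖ ≤ η) ∧ ‖Ψ a - b‖ ≤ η := by
  obtain ⟨ρ, hρ, hexp⟩ := exists_expSum_of_notMem_holomorphicHull hK hp
  refine ⟨ρ / 2, half_pos hρ, fun a b ha hb η hη => ?_⟩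
  rcases eq_or_ne (b - a) 0 with hv | hv
  · refine ⟨_, IsHolomorphicAutomorphism.id, by simp [hη.le], ?_⟩
    rw [← norm_neg, neg_sub, hv, norm_zero]
    exact hη.le
  set v := b - a with hvdef
  obtain ⟨m, u, hmv, hmu⟩ := exists_clm_eq_zero_and_eq_one hn hv
  set ε := min (η / 2) (ρ / 8) with hε
  have hε0 : 0 < ε := by positivity
  set ε' := ε * ρ / (8 * (‖u‖ * ‖v‖ + 1)) with hε'
  have hε'0 : 0 < ε' := by positivity
  obtain ⟨c, hcp, hcK⟩ := hexp m ε' hε'0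
  set G : EuclideanSpace ℂ (Fin n) → ℂ := fun z => ∑ l ∈ c.support, c l * Complex.exp (l z)
    with hG
  have hGd : Differentiable ℂ G := by fun_prop
  set W : (EuclideanSpace ℂ (Fin n) →L[ℂ] ℂ) → EuclideanSpace ℂ (Fin n) :=
    fun l => c l • (l u • v - l v • u) with hW
  set V : EuclideanSpace ℂ (Fin n) → EuclideanSpace ℂ (Fin n) :=
    fun z => ∑ l ∈ c.support, Complex.exp (l z) • W l with hV
  have hVint : ApproximatelyIntegrable V := approximatelyIntegrable_sum_exp c.support W
    fun l => by simp [hW, mul_comm]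
  have hfd : ∀ z x, fderiv ℂ G z x = ∑ l ∈ c.support, c l * Complex.exp (l z) * l x := by
    intro z x
    have h1 : HasFDerivAt G (∑ l ∈ c.support, c l • (Complex.exp (l z) • l)) z :=
      HasFDerivAt.fun_sum fun l _ => (l.hasFDerivAt.cexp).const_mul (c l)
    rw [h1.fderiv]
    simp [mul_assoc]
  have hVG : ∀ z, V z = fderiv ℂ G z u • v - fderiv ℂ G z v • u := by
    intro z
    simp only [hV, hW, hfd, Finset.sum_smul, ← Finset.sum_sub_distrib, smul_sub, smul_smul]
    exact Finset.sum_congr rfl fun l _ => by congr 2 <;> ring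
  have hbound : ∀ α β : ℂ, ‖α‖ ≤ ε' / (ρ / 4) * ‖u‖ → ‖β‖ ≤ ε' / (ρ / 4) * ‖v‖ →
      ‖α • v - β • u‖ ≤ ε := by
    intro α β hα hβ
    calc ‖α • v - β • u‖ ≤ ‖α‖ * ‖v‖ + ‖β‖ * ‖u‖ := by
          simpa [norm_smul] using norm_sub_le (α • v) (β • u)
      _ ≤ (ε' / (ρ / 4) * ‖u‖) * ‖v‖ + (ε' / (ρ / 4) * ‖v‖) * ‖u‖ := by gcongr
      _ = ε * ((‖u‖ * ‖v‖) / (‖u‖ * ‖v‖ + 1)) := by rw [hε']; field_simp; ring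
      _ ≤ ε * 1 := by
        gcongr
        rw [div_le_one (by positivity)]
        linarith
      _ = ε := mul_one ε
  obtain ⟨R₀, hR₀⟩ := hK.isBounded.exists_norm_le
  have h2ε : 2 * ε ≤ ρ / 4 := by linarith [min_le_right (η / 2) (ρ / 8)]
  have h2η : 2 * ε ≤ η := by linarith [min_le_left (η / 2) (ρ / 8)]
  set T : Set (EuclideanSpace ℂ (Fin n) × EuclideanSpace ℂ (Fin n)) :=
    insert (a, v) ((fun z => (z, 0)) '' K) with hTdef
  have hT : ∀ q ∈ T, ‖q.1‖ ≤ max R₀ (max ‖a‖ ‖v‖) ∧ ‖q.2‖ ≤ max R₀ (max ‖a‖ ‖v‖) := by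
    rintro q (rfl | ⟨z, hz, rfl⟩)
    · exact ⟨(le_max_left _ _).trans (le_max_right _ _),
        (le_max_right _ _).trans (le_max_right _ _)⟩
    · refine ⟨(hR₀ z hz).trans (le_max_left _ _), ?_⟩
      simp
  have hVT : ∀ q ∈ T, ∀ t : ℝ, 0 ≤ t → t ≤ 1 → ∀ w, ‖w - (q.1 + t • q.2)‖ ≤ 2 * ε →
      ‖V w - q.2‖ ≤ ε := by
    rintro q (rfl | ⟨z, hz, rfl⟩) t ht0 ht1 w hw
    · simp only at hw ⊢
      have hseg : ‖a + t • v - p‖ ≤ ρ / 2 := by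
        have : a + t • v - p = (1 - t) • (a - p) + t • (b - p) := by
          rw [hvdef]; module
        rw [this]
        refine (norm_add_le _ _).trans ?_
        rw [norm_smul, norm_smul, Real.norm_of_nonneg ht0,
          Real.norm_of_nonneg (sub_nonneg.mpr ht1)]
        nlinarith
      have hnear : ∀ x, ‖x - w‖ ≤ ρ / 4 → ‖G x - m x‖ ≤ ε' := by
        intro x hx
        refine hcp x ?_
        have h1 := norm_add₃_le (a := x - w) (b := w - (a + t • v)) (c := a + t • v - p)
        have h2 : x - w + (w - (a + t • v)) + (a + t • v - p) = x - p := by abel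
        rw [h2] at h1
        linarith
      have hder : ∀ x, fderiv ℂ (fun z => G z - m z) w x = fderiv ℂ G w x - m x := by
        intro x
        rw [((hGd w).hasFDerivAt.fun_sub m.hasFDerivAt).fderiv]
        rfl
      have hC : ∀ x, ‖fderiv ℂ G w x - m x‖ ≤ ε' / (ρ / 4) * ‖x‖ := fun x => by
        rw [← hder]
        exact (hGd.sub m.differentiable).norm_fderiv_apply_le (by positivity) hnear x
      have := hbound _ _ (hC u) (hC v)
      rw [hmu, hmv, sub_zero] at this
      rw [hVG]
      convert this using 2
      module
    · simp only [smul_zero, add_zero] at hw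
      have hnear : ∀ x, ‖x - w‖ ≤ ρ / 4 → ‖G x‖ ≤ ε' := by
        intro x hx
        refine hcK z hz x ?_
        have := norm_sub_le_norm_sub_add_norm_sub x w z
        linarith
      have hC : ∀ x, ‖fderiv ℂ G w x‖ ≤ ε' / (ρ / 4) * ‖x‖ :=
        hGd.norm_fderiv_apply_le (by positivity) hnear
      rw [hVG, sub_zero]
      exact hbound _ _ (hC u) (hC v)
  obtain ⟨Ψ, hΨ, hΨT⟩ := hVint.exists_automorphism hε0 hT hVT
  refine ⟨Ψ, hΨ, fun z hz => ?_, ?_⟩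
  · have := hΨT (z, 0) (mem_insert_of_mem _ (mem_image_of_mem _ hz))
    simpa using this.trans h2η
  · have := hΨT (a, v) (mem_insert _ _)
    simpa [hvdef] using this.trans h2η

end LocalMoves

section Interpolation

variable {n : ℕ}

/-- A shear along `ker l` can prescribe small displacements, in directions of `ker l`, at
finitely many points separated by `l`, while staying close to the identity on a ball. -/
theorem exists_shear_interpolating {l : EuclideanSpace ℂ (Fin n) →L[ℂ] ℂ}
    {P : Finset (EuclideanSpace ℂ (Fin n))} (hl : Set.InjOn l P) (R : ℝ) {ε : ℝ} (hε : 0 < ε) :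
    ∃ δ > 0, ∀ q a : EuclideanSpace ℂ (Fin n) → EuclideanSpace ℂ (Fin n),
      (∀ p ∈ P, ‖q p - p‖ < δ) → (∀ p ∈ P, ‖a p‖ < δ) → (∀ p ∈ P, l (a p) = 0) →
      ∃ Θ, IsHolomorphicAutomorphism Θ ∧ (∀ p ∈ P, Θ (q p) = q p - a p) ∧
        ∀ z, ‖z‖ ≤ R → ‖Θ z - z‖ < ε := by
  classical
  obtain ⟨κ, hκ, hκP⟩ : ∃ κ > 0, ∀ p ∈ P, ∀ p' ∈ P, p ≠ p' → κ ≤ ‖l p - l p'‖ := by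
    have : ∀ᶠ κ : ℝ in 𝓝[>] 0, ∀ p ∈ P, ∀ p' ∈ P, p ≠ p' → κ ≤ ‖l p - l p'‖ := by
      refine (Filter.eventually_all_finset P).2 fun p hp =>
        (Filter.eventually_all_finset P).2 fun p' hp' => ?_
      by_cases h : p = p'
      · simp [h]
      have h0 : 0 < ‖l p - l p'‖ := norm_pos_iff.2 (sub_ne_zero.2 fun e => h (hl hp hp' e))
      filter_upwards [mem_nhdsWithin_of_mem_nhds (Iic_mem_nhds h0)] with κ hκ _ using hκ
    obtain ⟨κ, h, hκ⟩ := (this.and self_mem_nhdsWithin).exists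
    exact ⟨κ, hκ, h⟩
  obtain ⟨S, hS⟩ := P.finite_toSet.isBounded.exists_norm_le
  set D := ‖l‖ * (|R| + |S| + 1) with hD
  have hD0 : 0 ≤ D := by positivity
  set B := max 1 (D / (κ / 2)) with hB
  have hB1 : 1 ≤ B := le_max_left _ _
  have hB0 : 0 ≤ B := zero_le_one.trans hB1
  set M := P.card * B ^ P.card with hM
  have hM0 : 0 ≤ M := by positivity
  refine ⟨min 1 (min (κ / (4 * (‖l‖ + 1))) (ε / (M + 1))), by positivity,
    fun q a hq ha hla => ?_⟩
  set δ := min 1 (min (κ / (4 * (‖l‖ + 1))) (ε / (M + 1))) with hδ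
  have hδ0 : 0 < δ := by positivity
  have hδ1 : δ ≤ 1 := min_le_left _ _
  have hδκ : ‖l‖ * δ ≤ κ / 4 := by
    have h : δ ≤ κ / (4 * (‖l‖ + 1)) := (min_le_right _ _).trans (min_le_left _ _)
    rw [le_div_iff₀ (by positivity)] at h
    linarith
  have hδM : M * δ < ε := by
    have h : δ ≤ ε / (M + 1) := (min_le_right _ _).trans (min_le_right _ _)
    rw [le_div_iff₀ (by positivity)] at h
    linarith
  have hlq : ∀ p ∈ P, ‖l (q p) - l p‖ ≤ κ / 4 := fun p hp => by
    rw [← map_sub]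
    exact (l.le_opNorm _).trans
      ((mul_le_mul_of_nonneg_left (hq p hp).le (norm_nonneg l)).trans hδκ)
  have hsep : ∀ p ∈ P, ∀ p' ∈ P, p ≠ p' → κ / 2 ≤ ‖l (q p) - l (q p')‖ := by
    intro p hp p' hp' hpp
    have h1 := norm_add₃_le (a := l p - l (q p)) (b := l (q p) - l (q p')) (c := l (q p') - l p')
    rw [sub_add_sub_cancel, sub_add_sub_cancel, norm_sub_rev (l p) (l (q p))] at h1
    linarith [hκP p hp p' hp' hpp, hlq p hp, hlq p' hp']
  set b : EuclideanSpace ℂ (Fin n) → ℂ → ℂ := fun p w =>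
    ∏ p' ∈ P.erase p, (w - l (q p')) / (l (q p) - l (q p')) with hb
  have hbself : ∀ p ∈ P, b p (l (q p)) = 1 := fun p hp =>
    Finset.prod_eq_one fun p' hp' => div_self (norm_pos_iff.1 ((half_pos hκ).trans_le
      (hsep p hp p' (Finset.mem_of_mem_erase hp') (Finset.ne_of_mem_erase hp').symm)))
  have hbne : ∀ p ∈ P, ∀ p' ∈ P, p ≠ p' → b p (l (q p')) = 0 := fun p _ p' hp' hpp =>
    Finset.prod_eq_zero (Finset.mem_erase.2 ⟨hpp.symm, hp'⟩) (by simp)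
  have hbd : ∀ p, Differentiable ℂ (b p) := fun p => by fun_prop
  have hbB : ∀ p ∈ P, ∀ z, ‖z‖ ≤ R → ‖b p (l z)‖ ≤ B ^ P.card := by
    intro p hp z hz
    rw [hb, norm_prod]
    calc ∏ p' ∈ P.erase p, ‖(l z - l (q p')) / (l (q p) - l (q p'))‖
        ≤ ∏ p' ∈ P.erase p, B := by
          refine Finset.prod_le_prod (fun _ _ => norm_nonneg _) fun p' hp' => ?_
          rw [Finset.mem_erase] at hp'
          rw [norm_div]
          refine le_trans ?_ (le_max_right _ _)
          refine div_le_div₀ hD0 ?_ (half_pos hκ) (hsep p hp p' hp'.2 hp'.1.symm)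
          rw [← map_sub]
          refine (l.le_opNorm _).trans (mul_le_mul_of_nonneg_left ?_ (norm_nonneg l))
          have h1 := norm_add₃_le (a := z) (b := -(q p' - p')) (c := -p')
          rw [norm_neg, norm_neg, show z + -(q p' - p') + -p' = z - q p' by abel] at h1
          linarith [hS p' hp'.2, hq p' hp'.2, le_abs_self R, le_abs_self S]
      _ = B ^ (P.erase p).card := Finset.prod_const B
      _ ≤ B ^ P.card := pow_le_pow_right₀ hB1 (Finset.card_le_card (Finset.erase_subset _ _))
  refine ⟨fun z => z + -∑ p ∈ P, b p (l z) • a p,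
    isHolomorphicAutomorphism_shear l (h := fun w => -∑ p ∈ P, b p w • a p) ?_ ?_, ?_, ?_⟩
  · fun_prop
  · intro w
    rw [map_neg, map_sum, Finset.sum_eq_zero, neg_zero]
    intro p hp
    rw [map_smul, hla p hp, smul_zero]
  · intro p hp
    dsimp only
    rw [Finset.sum_eq_single_of_mem p hp fun p' hp' hpp => by
      rw [hbne p' hp' p hp hpp, zero_smul], hbself p hp, one_smul, sub_eq_add_neg]
  · intro z hz
    rw [add_sub_cancel_left, norm_neg]
    refine lt_of_le_of_lt ?_ hδM
    calc ‖∑ p ∈ P, b p (l z) • a p‖ ≤ ∑ p ∈ P, B ^ P.card * δ :=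
          norm_sum_le_of_le P fun p hp => by
            rw [norm_smul]
            exact mul_le_mul (hbB p hp z hz) (ha p hp).le (norm_nonneg _) (by positivity)
      _ = M * δ := by rw [Finset.sum_const, nsmul_eq_mul, hM, mul_assoc]

/-- A continuous linear functional which is injective on a finite set and nonzero at a given
nonzero vector. -/
theorem exists_clm_injOn_and_ne_zero (P : Finset (EuclideanSpace ℂ (Fin n)))
    {v : EuclideanSpace ℂ (Fin n)} (hv : v ≠ 0) :
    ∃ l : EuclideanSpace ℂ (Fin n) →L[ℂ] ℂ, Set.InjOn l P ∧ l v ≠ 0 := by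
  classical
  let w : Option P.offDiag → EuclideanSpace ℂ (Fin n) :=
    fun o => o.elim v fun e => e.1.1 - e.1.2
  obtain ⟨f, hf⟩ := Module.exists_dual_forall_apply_ne_zero (K := ℂ) w (by
    rintro (_ | ⟨e, he⟩)
    · exact hv
    · exact sub_ne_zero.2 (Finset.mem_offDiag.1 he).2.2)
  refine ⟨LinearMap.toContinuousLinearMap f, fun p hp p' hp' h => ?_, hf none⟩
  by_contra hpp
  refine hf (some ⟨(p, p'), Finset.mem_offDiag.2 ⟨hp, hp', hpp⟩⟩) ?_
  simpa [w, sub_eq_zero] using h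

/-- Small perturbations of finitely many points can be undone by automorphisms close to the
identity on a ball. -/
theorem exists_automorphism_correcting (hn : 2 ≤ n) (P : Finset (EuclideanSpace ℂ (Fin n)))
    (R : ℝ) {ε : ℝ} (hε : 0 < ε) :
    ∃ δ > 0, ∀ q : EuclideanSpace ℂ (Fin n) → EuclideanSpace ℂ (Fin n),
      (∀ p ∈ P, ‖q p - p‖ < δ) →
      ∃ Θ, IsHolomorphicAutomorphism Θ ∧ (∀ p ∈ P, Θ (q p) = p) ∧
        ∀ z, ‖z‖ ≤ R → ‖Θ z - z‖ < ε := by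
  have : Nontrivial (EuclideanSpace ℂ (Fin n)) :=
    Module.nontrivial_of_finrank_pos (R := ℂ) (by rw [finrank_euclideanSpace_fin]; omega)
  obtain ⟨v₀, hv₀⟩ := exists_ne (0 : EuclideanSpace ℂ (Fin n))
  obtain ⟨l, hl, -⟩ := exists_clm_injOn_and_ne_zero P hv₀
  obtain ⟨v, hlv, hv⟩ : ∃ v, l v = 0 ∧ v ≠ 0 := by
    by_contra! h
    have hinj : Function.Injective (l : EuclideanSpace ℂ (Fin n) →ₗ[ℂ] ℂ) :=
      (injective_iff_map_eq_zero _).2 h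
    have := LinearMap.finrank_le_finrank_of_injective hinj
    rw [finrank_euclideanSpace_fin, Module.finrank_self] at this
    omega
  obtain ⟨μ, hμ, hμv⟩ := exists_clm_injOn_and_ne_zero P hv
  obtain ⟨δ₁, hδ₁, h₁⟩ := exists_shear_interpolating hl R (half_pos hε)
  obtain ⟨δ₂, hδ₂, h₂⟩ := exists_shear_interpolating hμ (R + ε / 2) (half_pos hε)
  set C := ‖μ‖ / ‖μ v‖ * ‖v‖ + 1 with hC
  have hC1 : 1 ≤ C := le_add_of_nonneg_left (by positivity)
  have hC0 : 0 < C := zero_lt_one.trans_le hC1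
  refine ⟨min δ₁ δ₂ / (2 * C), by positivity, fun q hq => ?_⟩
  set a : EuclideanSpace ℂ (Fin n) → EuclideanSpace ℂ (Fin n) :=
    fun p => (μ (q p - p) / μ v) • v with ha
  have hCq : ∀ p ∈ P, C * ‖q p - p‖ < min δ₁ δ₂ / 2 := fun p hp => by
    have := hq p hp
    rw [lt_div_iff₀ (by positivity)] at this
    linarith
  have hqa : ∀ p, ‖a p‖ ≤ C * ‖q p - p‖ := fun p => by
    rw [ha, norm_smul, norm_div]
    calc ‖μ (q p - p)‖ / ‖μ v‖ * ‖v‖ ≤ ‖μ‖ * ‖q p - p‖ / ‖μ v‖ * ‖v‖ := by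
          gcongr
          exact μ.le_opNorm _
      _ = ‖μ‖ / ‖μ v‖ * ‖v‖ * ‖q p - p‖ := by ring
      _ ≤ C * ‖q p - p‖ := by gcongr; linarith
  have hq1 : ∀ p, ‖q p - p‖ ≤ C * ‖q p - p‖ := fun p =>
    le_mul_of_one_le_left (norm_nonneg _) hC1
  have hmin : 0 < min δ₁ δ₂ := by positivity
  have hb : ∀ p ∈ P, ‖q p - a p - p‖ < δ₂ := fun p hp => by
    have := norm_sub_le (q p - p) (a p)
    rw [sub_right_comm]
    linarith [hqa p, hq1 p, hCq p hp, min_le_right δ₁ δ₂]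
  obtain ⟨Θ₁, hΘ₁, hΘ₁q, hΘ₁R⟩ := h₁ q a
    (fun p hp => by linarith [hq1 p, hCq p hp, min_le_left δ₁ δ₂])
    (fun p hp => by linarith [hqa p, hCq p hp, min_le_left δ₁ δ₂])
    (fun p _ => by simp [ha, hlv])
  obtain ⟨Θ₂, hΘ₂, hΘ₂q, hΘ₂R⟩ := h₂ (fun p => q p - a p) (fun p => q p - a p - p) hb hb
    (fun p _ => by
      rw [sub_right_comm, map_sub, ha, map_smul, smul_eq_mul, div_mul_cancel₀ _ hμv, sub_self])
  refine ⟨Θ₂ ∘ Θ₁, hΘ₂.comp hΘ₁, fun p hp => ?_, fun z hz => ?_⟩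
  · rw [Function.comp_apply, hΘ₁q p hp, hΘ₂q p hp, sub_sub_cancel]
  · have h1 := hΘ₁R z hz
    have h2 := hΘ₂R (Θ₁ z) (by
      have := norm_add_le (Θ₁ z - z) z
      rw [sub_add_cancel] at this
      linarith)
    have := norm_sub_le_norm_sub_add_norm_sub (Θ₂ (Θ₁ z)) (Θ₁ z) z
    rw [Function.comp_apply]
    linarith

end Interpolation

section Transitivity

variable {n : ℕ} {K : Set (EuclideanSpace ℂ (Fin n))}

/-- Points outside of the hull of `K` can be moved approximately to each other by automorphisms
close to the identity on `K`. -/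
theorem exists_automorphism_of_notMem_holomorphicHull (hn : 2 ≤ n) (hK : IsCompact K)
    {x y : EuclideanSpace ℂ (Fin n)} (hx : x ∉ holomorphicHull K) (hy : y ∉ holomorphicHull K)
    {η : ℝ} (hη : 0 < η) :
    ∃ Ψ, IsHolomorphicAutomorphism Ψ ∧ (∀ z ∈ K, ‖Ψ z - z‖ ≤ η) ∧ ‖Ψ y - x‖ ≤ η := by
  have : NeZero n := ⟨by omega⟩
  refine isPreconnected_compl_holomorphicHull.induction₂'
    (fun a b => ∀ η > 0, ∃ Ψ, IsHolomorphicAutomorphism Ψ ∧ (∀ z ∈ K, ‖Ψ z - z‖ ≤ η) ∧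
      ‖Ψ a - b‖ ≤ η) (fun p hp => ?_) (fun a b c _ _ _ hab hbc η hη => ?_) hy hx η hη
  · obtain ⟨ρ, hρ, h⟩ := exists_automorphism_near_of_notMem_holomorphicHull hn hK hp
    filter_upwards [mem_nhdsWithin_of_mem_nhds (closedBall_mem_nhds p hρ)] with b hb
    rw [mem_closedBall, dist_eq_norm] at hb
    have hp0 : ‖p - p‖ ≤ ρ := by simpa using hρ.le
    exact ⟨h p b hp0 hb, h b p hb hp0⟩
  · obtain ⟨Ψ₂, hΨ₂, hΨ₂K, hΨ₂b⟩ := hbc (η / 2) (half_pos hη)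
    obtain ⟨δ, hδ, hδK⟩ : ∃ δ > 0, ∀ z ∈ insert b K, ∀ w, ‖w - z‖ < δ →
        ‖Ψ₂ w - Ψ₂ z‖ < η / 2 := by
      have := (hK.insert b).uniformContinuousAt_of_continuousAt Ψ₂
        (fun z _ => hΨ₂.1.continuous.continuousAt) (Metric.dist_mem_uniformity (half_pos hη))
      obtain ⟨δ, hδ, h⟩ := Metric.mem_uniformity_dist.1 this
      refine ⟨δ, hδ, fun z hz w hw => ?_⟩
      have := h (a := z) (b := w) (by rwa [dist_comm, dist_eq_norm]) hz
      simpa [dist_eq_norm, norm_sub_rev] using this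
    obtain ⟨Ψ₁, hΨ₁, hΨ₁K, hΨ₁a⟩ := hab (δ / 2) (half_pos hδ)
    have hδ2 : δ / 2 < δ := half_lt_self hδ
    refine ⟨Ψ₂ ∘ Ψ₁, hΨ₂.comp hΨ₁, fun z hz => ?_, ?_⟩
    · have h1 := hδK z (mem_insert_of_mem b hz) (Ψ₁ z) ((hΨ₁K z hz).trans_lt hδ2)
      have h2 := norm_sub_le_norm_sub_add_norm_sub (Ψ₂ (Ψ₁ z)) (Ψ₂ z) z
      rw [Function.comp_apply]
      linarith [hΨ₂K z hz]
    · have h1 := hδK b (mem_insert b K) (Ψ₁ a) (hΨ₁a.trans_lt hδ2)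
      have h2 := norm_sub_le_norm_sub_add_norm_sub (Ψ₂ (Ψ₁ a)) (Ψ₂ b) c
      rw [Function.comp_apply]
      linarith

end Transitivity

/-- **Moving a point while fixing finitely many points and almost fixing a
compact set.**  Let `n ≥ 2`, `K ⊆ ℂⁿ` compact, `x, y` outside the
holomorphically convex hull of `K`, and `a₁, …, a_m ∈ K`.  Then for every
`ε > 0` there is a holomorphic automorphism `Ψ` of `ℂⁿ` fixing each `aᵢ`,
moving no point of `K` more than `ε`, and sending `y` to `x`. -/
theorem exists_automorphism_moving_point
    (n : ℕ) (hn : 2 ≤ n)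
    (K : Set (EuclideanSpace ℂ (Fin n))) (hK : IsCompact K)
    (x y : EuclideanSpace ℂ (Fin n))
    (hx : x ∉ holomorphicHull K) (hy : y ∉ holomorphicHull K)
    (m : ℕ) (a : Fin m → EuclideanSpace ℂ (Fin n)) (ha : ∀ i, a i ∈ K)
    (ε : ℝ) (hε : 0 < ε) :
    ∃ Ψ : EuclideanSpace ℂ (Fin n) → EuclideanSpace ℂ (Fin n),
      IsHolomorphicAutomorphism Ψ ∧
      (∀ i, Ψ (a i) = a i) ∧
      (∀ z ∈ K, ‖Ψ z - z‖ < ε) ∧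
      Ψ y = x := by
  classical
  have hxK : x ∉ K := fun h => hx (subset_holomorphicHull hK h)
  obtain ⟨R, hR⟩ := hK.isBounded.exists_norm_le
  obtain ⟨δ, hδ, hcorr⟩ := exists_automorphism_correcting hn
    (insert x (Finset.univ.image a)) (R + ε / 2) (half_pos hε)
  set η := min (δ / 2) (ε / 2) with hη
  have hηδ : η < δ := (min_le_left _ _).trans_lt (half_lt_self hδ)
  have hηε : η ≤ ε / 2 := min_le_right _ _
  obtain ⟨Φ, hΦ, hΦK, hΦy⟩ := exists_automorphism_of_notMem_holomorphicHull hn hK hx hy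
    (η := η) (by positivity)
  have hax : ∀ i, a i ≠ x := fun i h => hxK (h ▸ ha i)
  obtain ⟨Θ, hΘ, hΘP, hΘR⟩ := hcorr (fun p => if p = x then Φ y else Φ p) (by
    intro p hp
    rcases eq_or_ne p x with rfl | hpx
    · simpa using hΦy.trans_lt hηδ
    · obtain ⟨i, -, rfl⟩ := Finset.mem_image.1 ((Finset.mem_insert.1 hp).resolve_left hpx)
      simpa [hpx] using (hΦK _ (ha i)).trans_lt hηδ)
  refine ⟨Θ ∘ Φ, hΘ.comp hΦ, fun i => ?_, fun z hz => ?_, ?_⟩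
  · simpa [hax i] using hΘP (a i) (by simp)
  · have h1 := hΘR (Φ z) (by
      have := norm_add_le (Φ z - z) z
      rw [sub_add_cancel] at this
      linarith [hR z hz, hΦK z hz])
    have h2 := norm_sub_le_norm_sub_add_norm_sub (Θ (Φ z)) (Φ z) z
    rw [Function.comp_apply]
    linarith [hΦK z hz]
  · simpa using hΘP x (by simp)
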